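/- Let β > 2 and let (α_N) be a sequence with α_N > 0, α_N → 0 and N·α_N → 0. Then, as N → ∞ through even integers, the pushforward of the Gibbs measure μ_{N,α_N,β} under the map σ ↦ (m₁(σ), m₂(σ)) converges weakly in the space of probability measures on ℝ² to the four-point mixture (1/4)(δ_{(m⁺(β/2), m⁺(β/2))} + δ_{(m⁺(β/2), m⁻(β/2))} + δ_{(m⁻(β/2), m⁺(β/2))} + δ_{(m⁻(β/2), m⁻(β/2))}). -/

import Mathlib

open MeasureTheory Filter

noncomputable section

/-- The spin value ±1 associated to a Boolean. -/
def spinVal (s : Bool) : ℝ := if s then 1 else -1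

/-- A spin configuration on `N = 2n` sites, split into the two blocks
`B₁` (first component) and `B₂` (second component); the perfect matching
pairs the `i`-th spin of `B₁` with the `i`-th spin of `B₂`. -/
abbrev TwoConf (n : ℕ) := (Fin n → Bool) × (Fin n → Bool)

/-- Block magnetization `m₁(σ) = (2/N) ∑_{i ∈ B₁} σᵢ` with `N = 2n`. -/
def mag1 (n : ℕ) (σ : TwoConf n) : ℝ := (2 / (2 * n : ℝ)) * ∑ i, spinVal (σ.1 i)

/-- Block magnetization `m₂(σ) = (2/N) ∑_{i ∈ B₂} σᵢ` with `N = 2n`. -/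
def mag2 (n : ℕ) (σ : TwoConf n) : ℝ := (2 / (2 * n : ℝ)) * ∑ i, spinVal (σ.2 i)

/-- The Hamiltonian
`H_{N,α,β}(σ) = −(β/(2N))(∑_{i,j∈B₁} σᵢσⱼ + ∑_{i,j∈B₂} σᵢσⱼ) − α ∑_{i∈B₁} σᵢ σ_{i+N/2}`
with `N = 2n`. -/
def twoH (n : ℕ) (α β : ℝ) (σ : TwoConf n) : ℝ :=
  -(β / (2 * (2 * n : ℝ))) *
      ((∑ i, ∑ j, spinVal (σ.1 i) * spinVal (σ.1 j)) +
        ∑ i, ∑ j, spinVal (σ.2 i) * spinVal (σ.2 j))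
    - α * ∑ i, spinVal (σ.1 i) * spinVal (σ.2 i)

/-- The distribution of the magnetization vector `(m₁, m₂)` under the Gibbs measure
`μ_{N,α,β}`, i.e. the pushforward of the Gibbs measure under `σ ↦ (m₁(σ), m₂(σ))`. -/
def twoMagDist (n : ℕ) (α β : ℝ) : Measure (ℝ × ℝ) :=
  (∑ σ : TwoConf n, ENNReal.ofReal (Real.exp (-twoH n α β σ)))⁻¹ •
    ∑ σ : TwoConf n,
      ENNReal.ofReal (Real.exp (-twoH n α β σ)) • Measure.dirac (mag1 n σ, mag2 n σ)

def Ssum (n : ℕ) (s : Fin n → Bool) : ℝ := ∑ i, spinVal (s i)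
def Gfun (γ x : ℝ) : ℝ := Real.log (2 * Real.cosh (γ * x)) - γ * x ^ 2 / 2
def hfun (γ x : ℝ) : ℝ := Real.tanh (γ * x) - x

lemma mgf (n : ℕ) (t : ℝ) : ∑ s : Fin n → Bool, Real.exp (t * Ssum n s) = (2 * Real.cosh t) ^ n := by
  have h : ∀ s : Fin n → Bool, Real.exp (t * Ssum n s) = ∏ i, Real.exp (t * spinVal (s i)) := by
    intro s
    rw [Ssum, Finset.mul_sum, Real.exp_sum]
  simp_rw [h]
  have := Finset.prod_univ_sum (fun _ : Fin n => (Finset.univ : Finset Bool)) (fun _ b => Real.exp (t * spinVal b))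
  rw [Fintype.piFinset_univ] at this
  rw [← this]
  simp [spinVal, Real.cosh_eq]
  ring

lemma mgfG (n : ℕ) (γ x : ℝ) :
    ∑ s : Fin n → Bool, Real.exp (γ * x * Ssum n s - n * (γ * x ^ 2 / 2)) = Real.exp (n * Gfun γ x) := by
  simp_rw [sub_eq_add_neg, Real.exp_add, ← Finset.sum_mul]
  rw [mgf, Gfun, mul_sub, sub_eq_add_neg, Real.exp_add, mul_comm (n:ℝ) (Real.log _), mul_comm _ (n:ℝ), Real.exp_nat_mul, Real.exp_log (by positivity)]

lemma hasDerivAt_tanh_aux (x : ℝ) : HasDerivAt Real.tanh (1 / Real.cosh x ^ 2) x := by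
  have h := (Real.hasDerivAt_sinh x).div (Real.hasDerivAt_cosh x) (Real.cosh_pos x).ne'
  have e : Real.tanh = Real.sinh / Real.cosh := by ext y; simp [Real.tanh_eq_sinh_div_cosh]
  rw [e]
  refine h.congr_deriv ?_
  rw [← Real.cosh_sq_sub_sinh_sq x]; ring

lemma hasDerivAt_h (γ x : ℝ) : HasDerivAt (hfun γ) (γ / Real.cosh (γ * x) ^ 2 - 1) x := by
  have h := ((hasDerivAt_tanh_aux (γ * x)).comp x ((hasDerivAt_id x).const_mul γ)).sub (hasDerivAt_id x)
  refine h.congr_deriv ?_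
  ring

lemma hasDerivAt_G (γ x : ℝ) : HasDerivAt (Gfun γ) (γ * hfun γ x) x := by
  have h := ((((Real.hasDerivAt_cosh (γ * x)).comp x ((hasDerivAt_id x).const_mul γ)).const_mul 2).log
    (by have := Real.cosh_pos (γ * x); simp [this.ne'])).sub (((hasDerivAt_id x).pow 2).const_mul (γ / 2))
  refine (h.congr_deriv ?_).congr_of_eventuallyEq (Eventually.of_forall fun y => ?_)
  · have := (Real.cosh_pos (γ * x)).ne'
    simp [hfun, Real.tanh_eq_sinh_div_cosh]; field_simp
  · simp [Gfun]; ring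

lemma strictConcave_h {γ : ℝ} (hγ : 1 < γ) : StrictConcaveOn ℝ (Set.Ici 0) (hfun γ) := by
  apply StrictAntiOn.strictConcaveOn_of_deriv (convex_Ici 0)
  · exact fun x _ => (hasDerivAt_h γ x).continuousAt.continuousWithinAt
  · intro x hx y hy hxy
    rw [interior_Ici] at hx hy
    simp only [Set.mem_Ioi] at hx hy
    rw [(hasDerivAt_h γ x).deriv, (hasDerivAt_h γ y).deriv]
    have : Real.cosh (γ * x) < Real.cosh (γ * y) := by
      rw [Real.cosh_lt_cosh, abs_of_pos (by positivity), abs_of_pos (by positivity)]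
      gcongr
    have := Real.cosh_pos (γ * x)
    gcongr

lemma mp_pos {γ mp : ℝ} (hγ : 1 < γ) (hmax : ∀ z : ℝ, z = Real.tanh (γ * z) → z ≤ mp) : 0 < mp := by
  have h1 := hasDerivAt_h γ 0
  have h0 : hfun γ 0 = 0 := by simp [hfun]
  have h2 : ∀ᶠ x in nhdsWithin 0 (Set.Ioi 0), 0 < slope (hfun γ) 0 x := by
    have := (hasDerivAt_iff_tendsto_slope.mp h1).mono_left (nhdsWithin_mono (0:ℝ) (s := Set.Ioi 0) (fun x hx => ne_of_gt (Set.mem_Ioi.mp hx)))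
    apply this.eventually_const_lt
    simp; linarith
  obtain ⟨x, hx, hx0, hx1⟩ := (h2.and (Ioo_mem_nhdsGT (show (0:ℝ) < 2 by norm_num))).exists
  have hx2 : 0 < hfun γ x := by
    rw [slope_def_field, h0] at hx
    simp at hx
    by_contra hc
    have := div_nonpos_of_nonpos_of_nonneg (not_lt.mp hc) hx0.le
    linarith
  have h3 : hfun γ 2 ≤ 0 := by
    have := Real.tanh_lt_one (γ * 2)
    simp [hfun]; linarith
  have hc : ContinuousOn (hfun γ) (Set.Icc x 2) := fun x _ => (hasDerivAt_h γ x).continuousAt.continuousWithinAt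
  obtain ⟨z, hz, hz0⟩ := intermediate_value_Icc' hx1.le hc ⟨h3, hx2.le⟩
  have := hmax z (by simp [hfun] at hz0; linarith)
  linarith [hz.1]

lemma G_lt {γ mp : ℝ} (hγ : 1 < γ) (hmp : 0 < mp) (hfix : mp = Real.tanh (γ * mp)) (x : ℝ) (hx : 0 ≤ x) (hne : x ≠ mp) :
    Gfun γ x < Gfun γ mp := by
  have hsc := strictConcave_h hγ
  have h0 : hfun γ 0 = 0 := by simp [hfun]
  have h1 : hfun γ mp = 0 := by simp [hfun]; linarith
  have hcont : ∀ s, ContinuousOn (Gfun γ) s := fun s x _ => (hasDerivAt_G γ x).continuousAt.continuousWithinAt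
  have hm0 : (0:ℝ) ∈ Set.Ici (0:ℝ) := by simp
  rcases lt_or_gt_of_ne hne with h | h
  · have : StrictMonoOn (Gfun γ) (Set.Icc 0 mp) := by
      apply strictMonoOn_of_deriv_pos (convex_Icc 0 mp) (hcont _)
      intro y hy
      rw [interior_Icc] at hy
      rw [(hasDerivAt_G γ y).deriv]
      have := hsc.lt_on_openSegment hm0 (show mp ∈ Set.Ici (0:ℝ) from hmp.le) hmp.ne (z := y) (by rwa [openSegment_eq_Ioo hmp])
      rw [h0, h1, min_self] at this
      positivity
    exact this ⟨hx, h.le⟩ ⟨hmp.le, le_rfl⟩ h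
  · have : StrictAntiOn (Gfun γ) (Set.Ici mp) := by
      apply strictAntiOn_of_deriv_neg (convex_Ici mp) (hcont _)
      intro y hy
      rw [interior_Ici] at hy
      rw [(hasDerivAt_G γ y).deriv]
      have hy' : 0 < y := hmp.trans hy
      have := hsc.lt_on_openSegment hm0 (show y ∈ Set.Ici (0:ℝ) from hy'.le) hy'.ne (z := mp) (by rw [openSegment_eq_Ioo hy']; exact ⟨hmp, hy⟩)
      rw [h0, h1] at this
      have : hfun γ y < 0 := by
        by_contra hc
        rw [min_eq_left (not_lt.mp hc)] at this
        linarith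
      exact mul_neg_of_pos_of_neg (by linarith) this
    exact this (by simp) h.le h

lemma G_gap {γ mp : ℝ} (hγ : 1 < γ) (hmp : 0 < mp) (hfix : mp = Real.tanh (γ * mp)) (ε : ℝ) (hε : 0 < ε) :
    ∃ δ > 0, ∀ x, |x| ≤ 1 → ε ≤ |(|x| - mp)| → Gfun γ x ≤ Gfun γ mp - δ := by
  have heven : ∀ x, Gfun γ |x| = Gfun γ x := by
    intro x
    rcases abs_choice x with h | h <;> rw [h]
    simp [Gfun]
  have hlt : ∀ x, ε ≤ |(|x| - mp)| → Gfun γ x < Gfun γ mp := by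
    intro x hx
    rw [← heven]
    apply G_lt hγ hmp hfix _ (abs_nonneg x)
    intro h
    rw [h] at hx; simp at hx; linarith
  have hK : IsCompact (Set.Icc (-1:ℝ) 1 ∩ {x | ε ≤ |(|x| - mp)|}) :=
    isCompact_Icc.inter_right (isClosed_le continuous_const (by fun_prop))
  rcases Set.eq_empty_or_nonempty (Set.Icc (-1:ℝ) 1 ∩ {x | ε ≤ |(|x| - mp)|}) with he | hne
  · refine ⟨1, one_pos, fun x h1 h2 => ?_⟩
    have : x ∈ (Set.Icc (-1:ℝ) 1 ∩ {x | ε ≤ |(|x| - mp)|}) := ⟨abs_le.mp h1, h2⟩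
    rw [he] at this; simp at this
  · obtain ⟨z, hz, hzm⟩ := hK.exists_isMaxOn hne (f := Gfun γ) (fun x _ => (hasDerivAt_G γ x).continuousAt.continuousWithinAt)
    refine ⟨Gfun γ mp - Gfun γ z, by linarith [hlt z hz.2], fun x h1 h2 => ?_⟩
    have := hzm (show x ∈ _ from ⟨abs_le.mp h1, h2⟩)
    simp at this; linarith

def cw (n : ℕ) (γ : ℝ) (s : Fin n → Bool) : ℝ := Real.exp (γ / (2 * n) * Ssum n s ^ 2)

lemma Z_lower {n : ℕ} (hn : 0 < n) {γ : ℝ} (hγ : 0 < γ) (x : ℝ) : Real.exp (n * Gfun γ x) ≤ ∑ s, cw n γ s := by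
  rw [← mgfG]
  apply Finset.sum_le_sum
  intro s _
  apply Real.exp_le_exp.mpr
  have hn' : (0:ℝ) < n := by exact_mod_cast hn
  have : γ / (2 * n) * Ssum n s ^ 2 - (γ * x * Ssum n s - n * (γ * x ^ 2 / 2)) = γ / (2 * n) * (Ssum n s - n * x) ^ 2 := by
    field_simp; ring
  have : 0 ≤ γ / (2 * n) * (Ssum n s - n * x) ^ 2 := by positivity
  linarith

lemma level {n : ℕ} (hn : 0 < n) {γ : ℝ} (x : ℝ) :
    ∑ s with Ssum n s / n = x, cw n γ s ≤ Real.exp (n * Gfun γ x) := by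
  rw [← mgfG]
  have hn' : (0:ℝ) < n := by exact_mod_cast hn
  refine le_trans (Finset.sum_le_sum (fun s hs => ?_)) (Finset.sum_le_sum_of_subset_of_nonneg (Finset.filter_subset _ _) (fun _ _ _ => (Real.exp_pos _).le))
  apply Real.exp_le_exp.mpr
  simp at hs
  rw [← hs]
  apply le_of_eq
  field_simp; ring

lemma Ssum_eq (n : ℕ) (s : Fin n → Bool) : Ssum n s = 2 * (Finset.univ.filter (fun i => s i = true)).card - n := by
  have : ∀ i, spinVal (s i) = 2 * (if s i = true then 1 else 0) - 1 := by
    intro i; unfold spinVal; split_ifs <;> norm_num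
  simp only [Ssum, this, Finset.sum_sub_distrib, ← Finset.mul_sum, Finset.sum_boole]
  simp

lemma Ssum_abs (n : ℕ) (s : Fin n → Bool) : |Ssum n s| ≤ n := by
  have : (Finset.univ.filter (fun i => s i = true)).card ≤ n := by
    simpa using Finset.card_filter_le Finset.univ (fun i => s i = true)
  have : ((Finset.univ.filter (fun i => s i = true)).card : ℝ) ≤ n := by exact_mod_cast this
  rw [Ssum_eq, abs_le]
  constructor <;> linarith [Nat.cast_nonneg (α := ℝ) (Finset.univ.filter (fun i => s i = true)).card]

lemma card_image_le (n : ℕ) : (Finset.univ.image (fun s : Fin n → Bool => Ssum n s / n)).card ≤ n + 1 := by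
  have : Finset.univ.image (fun s : Fin n → Bool => Ssum n s / n) ⊆ (Finset.range (n+1)).image (fun k : ℕ => (2 * (k:ℝ) - n) / n) := by
    intro x hx
    simp only [Finset.mem_image, Finset.mem_univ, true_and] at hx
    obtain ⟨s, rfl⟩ := hx
    rw [Ssum_eq]
    refine Finset.mem_image_of_mem (fun k : ℕ => (2 * (k:ℝ) - n) / n) ?_
    have := Finset.card_filter_le Finset.univ (fun i => s i = true)
    simp at this ⊢
    omega
  exact (Finset.card_le_card this).trans (Finset.card_image_le.trans (by simp))

def bad (n : ℕ) (mp ε : ℝ) : Finset (Fin n → Bool) := 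
  Finset.univ.filter (fun s => ε ≤ |(|Ssum n s / n| - mp)|)

lemma bad_le {n : ℕ} (hn : 0 < n) {γ mp ε δ : ℝ} (hγ : 0 < γ)
    (hδ : ∀ x, |x| ≤ 1 → ε ≤ |(|x| - mp)| → Gfun γ x ≤ Gfun γ mp - δ) :
    ∑ s ∈ bad n mp ε, cw n γ s ≤ (n + 1) * Real.exp (-(n * δ)) * ∑ s, cw n γ s := by
  have hn' : (0:ℝ) < n := by exact_mod_cast hn
  have h1 : ∑ s ∈ bad n mp ε, cw n γ s = ∑ v ∈ (bad n mp ε).image (fun s => Ssum n s / n), ∑ s ∈ bad n mp ε with Ssum n s / n = v, cw n γ s := by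
    symm
    exact Finset.sum_fiberwise_of_maps_to (fun s hs => Finset.mem_image_of_mem _ hs) _
  rw [h1]
  have h2 : ∀ v ∈ (bad n mp ε).image (fun s => Ssum n s / n), ∑ s ∈ bad n mp ε with Ssum n s / n = v, cw n γ s ≤ Real.exp (-(n * δ)) * ∑ s, cw n γ s := by
    intro v hv
    calc _ ≤ ∑ s with Ssum n s / n = v, cw n γ s := 
          Finset.sum_le_sum_of_subset_of_nonneg (Finset.filter_subset_filter _ (Finset.subset_univ _)) (fun _ _ _ => (Real.exp_pos _).le)
      _ ≤ Real.exp (n * Gfun γ v) := level hn v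
      _ ≤ Real.exp (-(n * δ)) * Real.exp (n * Gfun γ mp) := by
          rw [← Real.exp_add]
          apply Real.exp_le_exp.mpr
          simp only [bad, Finset.mem_image, Finset.mem_filter, Finset.mem_univ, true_and] at hv
          obtain ⟨s, hs, rfl⟩ := hv
          have := hδ (Ssum n s / n) (by rw [abs_div, Nat.abs_cast, div_le_one hn']; exact Ssum_abs n s) hs
          nlinarith
      _ ≤ _ := by
          gcongr
          exact Z_lower hn hγ mp
  refine (Finset.sum_le_card_nsmul _ _ _ h2).trans ?_
  rw [nsmul_eq_mul, mul_assoc]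
  have hc : ((bad n mp ε).image (fun s => Ssum n s / n)).card ≤ n + 1 :=
    (Finset.card_le_card (Finset.image_subset_image (Finset.subset_univ _))).trans (card_image_le n)
  have hc' : (((bad n mp ε).image (fun s => Ssum n s / n)).card : ℝ) ≤ n + 1 := by exact_mod_cast hc
  have : 0 ≤ ∑ s, cw n γ s := Finset.sum_nonneg (fun _ _ => (Real.exp_pos _).le)
  gcongr

lemma bad_tendsto (δ : ℝ) (hδ : 0 < δ) : Tendsto (fun n : ℕ => ((n:ℝ) + 1) * Real.exp (-(n * δ))) atTop (nhds 0) := by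
  have h : |Real.exp (-δ)| < 1 := by rw [abs_of_pos (Real.exp_pos _)]; simpa using hδ
  have h1 := (tendsto_self_mul_const_pow_of_abs_lt_one h).add (tendsto_pow_atTop_nhds_zero_of_abs_lt_one h)
  rw [add_zero] at h1
  refine h1.congr (fun n => ?_)
  rw [← Real.exp_nat_mul]
  rw [mul_neg]; ring

lemma compare_avg {ι : Type*} [Fintype ι] [Nonempty ι] (W0 u F : ι → ℝ) (a C : ℝ) (hC : 0 ≤ C)
    (hW0 : ∀ i, 0 < W0 i) (hu : ∀ i, |u i| ≤ a) (hF : ∀ i, |F i| ≤ C) :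
    |(∑ i, W0 i * Real.exp (u i) * F i) / (∑ i, W0 i * Real.exp (u i)) - (∑ i, W0 i * F i) / ∑ i, W0 i|
      ≤ C * (Real.exp (2 * a) - 1) := by
  set Z := ∑ i, W0 i * Real.exp (u i) with hZ
  set Z0 := ∑ i, W0 i with hZ0
  have hZ0p : 0 < Z0 := Finset.sum_pos (fun i _ => hW0 i) Finset.univ_nonempty
  have hZp : 0 < Z := Finset.sum_pos (fun i _ => mul_pos (hW0 i) (Real.exp_pos _)) Finset.univ_nonempty
  have ha : 0 ≤ a := (abs_nonneg _).trans (hu (Classical.arbitrary ι))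
  have hup : ∀ i, Real.exp (u i) ≤ Real.exp a := fun i => Real.exp_le_exp.mpr (abs_le.mp (hu i)).2
  have hlo : ∀ i, Real.exp (-a) ≤ Real.exp (u i) := fun i => Real.exp_le_exp.mpr (abs_le.mp (hu i)).1
  have hZup : Z ≤ Real.exp a * Z0 := by
    rw [hZ, hZ0, Finset.mul_sum]
    exact Finset.sum_le_sum fun i _ => by rw [mul_comm]; exact mul_le_mul_of_nonneg_right (hup i) (hW0 i).le
  have hZlo : Real.exp (-a) * Z0 ≤ Z := by
    rw [hZ, hZ0, Finset.mul_sum]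
    exact Finset.sum_le_sum fun i _ => by rw [mul_comm (W0 i)]; exact mul_le_mul_of_nonneg_right (hlo i) (hW0 i).le
  have he1 : 1 ≤ Real.exp a := Real.one_le_exp ha
  have hea : Real.exp a * Real.exp (-a) = 1 := by rw [← Real.exp_add]; simp
  have he2 : Real.exp (2 * a) = Real.exp a * Real.exp a := by rw [← Real.exp_add]; ring_nf
  -- bound on the ratio
  have hq1 : Z0 / Z ≤ Real.exp a := by
    rw [div_le_iff₀ hZp]
    nlinarith [Real.exp_pos a]
  have hq2 : Real.exp (-a) ≤ Z0 / Z := by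
    rw [le_div_iff₀ hZp]
    nlinarith [Real.exp_pos (-a)]
  have hr : ∀ i, |Real.exp (u i) * (Z0 / Z) - 1| ≤ Real.exp (2 * a) - 1 := by
    intro i
    have h1 : Real.exp (u i) * (Z0 / Z) ≤ Real.exp a * Real.exp a :=
      mul_le_mul (hup i) hq1 (by positivity) (by positivity)
    have h2 : Real.exp (-a) * Real.exp (-a) ≤ Real.exp (u i) * (Z0 / Z) :=
      mul_le_mul (hlo i) hq2 (by positivity) (by positivity)
    have h3 : 2 ≤ Real.exp a * Real.exp a + Real.exp (-a) * Real.exp (-a) := by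
      nlinarith [sq_nonneg (Real.exp a - Real.exp (-a))]
    rw [abs_le, he2]
    constructor <;> linarith
  have heq : (∑ i, W0 i * Real.exp (u i) * F i) / Z - (∑ i, W0 i * F i) / Z0
      = ∑ i, (W0 i / Z0) * ((Real.exp (u i) * (Z0 / Z) - 1) * F i) := by
    rw [Finset.sum_div, Finset.sum_div, ← Finset.sum_sub_distrib]
    refine Finset.sum_congr rfl fun i _ => ?_
    field_simp
  rw [heq]
  calc _ ≤ ∑ i, |(W0 i / Z0) * ((Real.exp (u i) * (Z0 / Z) - 1) * F i)| := Finset.abs_sum_le_sum_abs _ _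
    _ ≤ ∑ i, (W0 i / Z0) * ((Real.exp (2 * a) - 1) * C) := by
        refine Finset.sum_le_sum fun i _ => ?_
        have := hW0 i
        rw [abs_mul, abs_of_pos (div_pos this hZ0p), abs_mul]
        have h5 := hr i
        have h6 := hF i
        have h7 := (abs_nonneg _).trans h5
        gcongr
    _ = C * (Real.exp (2 * a) - 1) := by
        rw [← Finset.sum_mul, ← Finset.sum_div, div_self hZ0p.ne']; ring

def flipEquiv (n : ℕ) : (Fin n → Bool) ≃ (Fin n → Bool) := Equiv.arrowCongr (Equiv.refl _) Equiv.boolNot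

lemma Ssum_flip (n : ℕ) (s : Fin n → Bool) : Ssum n (flipEquiv n s) = - Ssum n s := by
  rw [Ssum, Ssum, ← Finset.sum_neg_distrib]
  refine Finset.sum_congr rfl fun i _ => ?_
  simp only [flipEquiv, Equiv.arrowCongr_apply, Function.comp, Equiv.refl_symm, Equiv.refl_apply, Equiv.boolNot, Equiv.coe_fn_mk]
  cases s i <;> simp [spinVal]

lemma cw_flip (n : ℕ) (γ : ℝ) (s : Fin n → Bool) : cw n γ (flipEquiv n s) = cw n γ s := by
  simp [cw, Ssum_flip]

lemma sum_flip (n : ℕ) (γ : ℝ) (φ : ℝ → ℝ) :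
    ∑ s, cw n γ s * φ (Ssum n s / n) = ∑ s, cw n γ s * φ (-(Ssum n s / n)) := by
  rw [← Equiv.sum_comp (flipEquiv n)]
  simp_rw [cw_flip, Ssum_flip, neg_div]

def symf (f : ℝ × ℝ → ℝ) (x y : ℝ) : ℝ := (f (x, y) + f (x, -y) + f (-x, y) + f (-x, -y)) / 4

lemma symf_abs (f : ℝ × ℝ → ℝ) (x y : ℝ) : symf f |x| |y| = symf f x y := by
  rcases abs_choice x with h | h <;> rcases abs_choice y with h' | h' <;> rw [h, h'] <;> simp [symf] <;> ring

lemma sum_symf (n : ℕ) (γ : ℝ) (f : ℝ × ℝ → ℝ) :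
    ∑ s, ∑ t, cw n γ s * cw n γ t * f (Ssum n s / n, Ssum n t / n)
      = ∑ s, ∑ t, cw n γ s * cw n γ t * symf f (Ssum n s / n) (Ssum n t / n) := by
  have h1 : ∀ g : ℝ × ℝ → ℝ, ∑ s, ∑ t, cw n γ s * cw n γ t * g (Ssum n s / n, Ssum n t / n)
      = ∑ s, ∑ t, cw n γ s * cw n γ t * g (Ssum n s / n, -(Ssum n t / n)) := by
    intro g
    refine Finset.sum_congr rfl fun s _ => ?_
    simp_rw [mul_assoc, ← Finset.mul_sum]
    rw [sum_flip n γ (fun y => g (Ssum n s / n, y))]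
  have h2 : ∀ g : ℝ × ℝ → ℝ, ∑ s, ∑ t, cw n γ s * cw n γ t * g (Ssum n s / n, Ssum n t / n)
      = ∑ s, ∑ t, cw n γ s * cw n γ t * g (-(Ssum n s / n), Ssum n t / n) := by
    intro g
    rw [Finset.sum_comm, Finset.sum_comm (f := fun s t => cw n γ s * cw n γ t * g (-(Ssum n s / n), Ssum n t / n))]
    refine Finset.sum_congr rfl fun t _ => ?_
    simp_rw [mul_comm (cw n γ _) (cw n γ t), mul_assoc, ← Finset.mul_sum]
    rw [sum_flip n γ (fun x => g (x, Ssum n t / n))]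
  have e1 := h1 f
  have e2 := h2 f
  have e3 := h2 (fun p => f (p.1, -p.2))
  simp only at e3
  have : ∑ s, ∑ t, cw n γ s * cw n γ t * symf f (Ssum n s / n) (Ssum n t / n)
    = (∑ s, ∑ t, cw n γ s * cw n γ t * f (Ssum n s / n, Ssum n t / n)
      + ∑ s, ∑ t, cw n γ s * cw n γ t * f (Ssum n s / n, -(Ssum n t / n))
      + ∑ s, ∑ t, cw n γ s * cw n γ t * f (-(Ssum n s / n), Ssum n t / n)
      + ∑ s, ∑ t, cw n γ s * cw n γ t * f (-(Ssum n s / n), -(Ssum n t / n))) / 4 := by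
    simp_rw [← Finset.sum_add_distrib, Finset.sum_div]
    refine Finset.sum_congr rfl fun s _ => Finset.sum_congr rfl fun t _ => ?_
    simp only [symf]; ring
  rw [this]; linarith

lemma cw_pos (n : ℕ) (γ : ℝ) (s : Fin n → Bool) : 0 < cw n γ s := Real.exp_pos _

lemma prod_close {n : ℕ} {γ mp ε η C r : ℝ} (f : ℝ × ℝ → ℝ) (hC : 0 ≤ C) (hη : 0 ≤ η) (hf : ∀ p, |f p| ≤ C)
    (hε : ∀ x y : ℝ, |x - mp| < ε → |y - mp| < ε → |symf f x y - symf f mp mp| ≤ η)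
    (hr : ∑ s ∈ bad n mp ε, cw n γ s ≤ r * ∑ s, cw n γ s) :
    |(∑ σ : (Fin n → Bool) × (Fin n → Bool), cw n γ σ.1 * cw n γ σ.2 * f (Ssum n σ.1 / n, Ssum n σ.2 / n)) /
        (∑ σ : (Fin n → Bool) × (Fin n → Bool), cw n γ σ.1 * cw n γ σ.2) - symf f mp mp| ≤ η + 4 * C * r := by
  set Z := ∑ s, cw n γ s with hZ
  set B := ∑ s ∈ bad n mp ε, cw n γ s with hB
  have hZp : 0 < Z := Finset.sum_pos (fun s _ => cw_pos n γ s) Finset.univ_nonempty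
  rw [Fintype.sum_prod_type, Fintype.sum_prod_type]
  simp only
  rw [sum_symf]
  have hZ2 : ∑ s, ∑ t, cw n γ s * cw n γ t = Z * Z := by
    rw [hZ, Finset.sum_mul_sum]
  have hsf : ∀ x y, |symf f x y| ≤ C := by
    intro x y
    have h1 := abs_le.mp (hf (x, y))
    have h2 := abs_le.mp (hf (x, -y))
    have h3 := abs_le.mp (hf (-x, y))
    have h4 := abs_le.mp (hf (-x, -y))
    rw [symf, abs_le]; constructor <;> linarith
  have hpt : ∀ s t : Fin n → Bool, |symf f (Ssum n s / n) (Ssum n t / n) - symf f mp mp| ≤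
      η + 2 * C * (if s ∈ bad n mp ε then 1 else 0) + 2 * C * (if t ∈ bad n mp ε then 1 else 0) := by
    intro s t
    have htriv : |symf f (Ssum n s / n) (Ssum n t / n) - symf f mp mp| ≤ 2 * C := by
      have h1 := abs_le.mp (hsf (Ssum n s / n) (Ssum n t / n))
      have h2 := abs_le.mp (hsf mp mp)
      rw [abs_le]; constructor <;> linarith
    by_cases hs : s ∈ bad n mp ε
    · simp only [hs, if_true]
      split_ifs <;> linarith
    by_cases ht : t ∈ bad n mp ε
    · simp only [hs, ht, if_true, if_false]; linarith
    simp only [hs, ht, if_false]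
    simp [bad] at hs ht
    rw [← symf_abs]
    have := hε _ _ hs ht
    linarith
  have hdiff : (∑ s, ∑ t, cw n γ s * cw n γ t * symf f (Ssum n s / n) (Ssum n t / n)) / (Z * Z) - symf f mp mp
      = (∑ s, ∑ t, cw n γ s * cw n γ t * (symf f (Ssum n s / n) (Ssum n t / n) - symf f mp mp)) / (Z * Z) := by
    simp_rw [mul_sub, Finset.sum_sub_distrib, ← Finset.sum_mul]
    rw [hZ2]; field_simp
  rw [hZ2, hdiff, abs_div, abs_of_pos (mul_pos hZp hZp), div_le_iff₀ (mul_pos hZp hZp)]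
  have hb : ∑ s, cw n γ s * (if s ∈ bad n mp ε then (1:ℝ) else 0) = B := by
    simp [hB]
  calc _ ≤ ∑ s, ∑ t, cw n γ s * cw n γ t * (η + 2 * C * (if s ∈ bad n mp ε then 1 else 0) + 2 * C * (if t ∈ bad n mp ε then 1 else 0)) := by
        refine (Finset.abs_sum_le_sum_abs _ _).trans (Finset.sum_le_sum fun s _ => ?_)
        refine (Finset.abs_sum_le_sum_abs _ _).trans (Finset.sum_le_sum fun t _ => ?_)
        rw [abs_mul, abs_of_pos (mul_pos (cw_pos n γ s) (cw_pos n γ t))]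
        exact mul_le_mul_of_nonneg_left (hpt s t) (mul_pos (cw_pos n γ s) (cw_pos n γ t)).le
    _ = η * (Z * Z) + 2 * C * (B * Z) + 2 * C * (Z * B) := by
        rw [← hb, hZ]
        simp_rw [Finset.sum_mul_sum, Finset.mul_sum, ← Finset.sum_add_distrib]
        refine Finset.sum_congr rfl fun s _ => Finset.sum_congr rfl fun t _ => ?_
        ring
    _ ≤ _ := by
        have : B * Z ≤ r * Z * Z := mul_le_mul_of_nonneg_right hr hZp.le
        nlinarith

lemma symf_cont (f : ℝ × ℝ → ℝ) (hf : Continuous f) (mp η : ℝ) (hη : 0 < η) :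
    ∃ ε > 0, ∀ x y : ℝ, |x - mp| < ε → |y - mp| < ε → |symf f x y - symf f mp mp| ≤ η := by
  have hc : Continuous (fun p : ℝ × ℝ => symf f p.1 p.2) := by
    unfold symf; fun_prop
  obtain ⟨ε, hε, h⟩ := Metric.continuous_iff.mp hc (mp, mp) η hη
  refine ⟨ε, hε, fun x y hx hy => ?_⟩
  have := h (x, y) (by rw [Prod.dist_eq]; simp [Real.dist_eq, hx, hy])
  rw [Real.dist_eq] at this
  exact this.le

lemma twoH_eq {n : ℕ} (α β : ℝ) (σ : TwoConf n) :
    Real.exp (-twoH n α β σ) = cw n (β / 2) σ.1 * cw n (β / 2) σ.2 * Real.exp (α * ∑ i, spinVal (σ.1 i) * spinVal (σ.2 i)) := by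
  rw [cw, cw, ← Real.exp_add, ← Real.exp_add]
  congr 1
  simp only [twoH, ← Finset.sum_mul_sum, Ssum]
  ring

lemma mag_eq (n : ℕ) (S : ℝ) : (2 / (2 * n : ℝ)) * S = S / n := by
  rw [div_eq_mul_inv, mul_inv]; ring

lemma inter_bound {n : ℕ} (σ : TwoConf n) : |∑ i, spinVal (σ.1 i) * spinVal (σ.2 i)| ≤ n := by
  refine (Finset.abs_sum_le_sum_abs _ _).trans ?_
  have : ∀ i, |spinVal (σ.1 i) * spinVal (σ.2 i)| = 1 := by
    intro i; unfold spinVal; split_ifs <;> simp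
  simp [this]

lemma integral_twoMag (n : ℕ) (α β : ℝ) (f : BoundedContinuousFunction (ℝ × ℝ) ℝ) :
    ∫ x, f x ∂(twoMagDist n α β) =
      (∑ σ : TwoConf n, Real.exp (-twoH n α β σ) * f (mag1 n σ, mag2 n σ)) / ∑ σ : TwoConf n, Real.exp (-twoH n α β σ) := by
  rw [twoMagDist, integral_smul_measure, integral_finsetSum_measure]
  · simp_rw [integral_smul_measure, integral_dirac]
    rw [← ENNReal.ofReal_sum_of_nonneg (fun _ _ => (Real.exp_pos _).le)]
    simp only [ENNReal.toReal_inv, smul_eq_mul]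
    rw [ENNReal.toReal_ofReal (Finset.sum_nonneg fun _ _ => (Real.exp_pos _).le)]
    simp_rw [ENNReal.toReal_ofReal (Real.exp_pos _).le]
    rw [div_eq_inv_mul]
  · intro σ _
    exact (integrable_dirac (by simp)).smul_measure ENNReal.ofReal_ne_top

lemma integral_limit (mp : ℝ) (f : BoundedContinuousFunction (ℝ × ℝ) ℝ) :
    ∫ x, f x ∂((4 : ENNReal)⁻¹ •
        (Measure.dirac ((mp, mp) : ℝ × ℝ) + Measure.dirac ((mp, -mp) : ℝ × ℝ) +
          Measure.dirac ((-mp, mp) : ℝ × ℝ) + Measure.dirac ((-mp, -mp) : ℝ × ℝ))) = symf f mp mp := by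
  have hi : ∀ p : ℝ × ℝ, Integrable f (Measure.dirac p) := fun p => integrable_dirac (by simp)
  rw [integral_smul_measure, integral_add_measure (((hi _).add_measure (hi _)).add_measure (hi _)) (hi _),
    integral_add_measure ((hi _).add_measure (hi _)) (hi _), integral_add_measure (hi _) (hi _)]
  simp [symf]; ring

/-- Theorem 1(2): if `β > 2`, `α_N > 0`, `α_N → 0` and `N α_N → 0`, then the distribution
of `m^N = (m₁, m₂)` under the Gibbs measure converges weakly to the four-point mixture
`(1/4)(δ_{(m⁺,m⁺)} + δ_{(m⁺,m⁻)} + δ_{(m⁻,m⁺)} + δ_{(m⁻,m⁻))})` with `m^± = m^±(β/2)`. -/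
theorem two_block_mixed_limit (β : ℝ) (hβ : 2 < β) (mp : ℝ)
    (hfix : mp = Real.tanh (β / 2 * mp))
    (hmax : ∀ z : ℝ, z = Real.tanh (β / 2 * z) → z ≤ mp)
    (α : ℕ → ℝ) (hαpos : ∀ N, 0 < α N)
    (hα0 : Tendsto α atTop (nhds 0))
    (hNα : Tendsto (fun N : ℕ => (N : ℝ) * α N) atTop (nhds 0))
    (f : BoundedContinuousFunction (ℝ × ℝ) ℝ) :
    Tendsto (fun n : ℕ => ∫ x, f x ∂(twoMagDist n (α (2 * n)) β)) atTop
      (nhds (∫ x, f x ∂((4 : ENNReal)⁻¹ •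
        (Measure.dirac ((mp, mp) : ℝ × ℝ) + Measure.dirac ((mp, -mp) : ℝ × ℝ) +
          Measure.dirac ((-mp, mp) : ℝ × ℝ) + Measure.dirac ((-mp, -mp) : ℝ × ℝ))))) := by
  have hγ : 1 < β / 2 := by linarith
  have hmp := mp_pos hγ hmax
  rw [integral_limit]
  set C := ‖f‖ with hCdef
  have hC : 0 ≤ C := norm_nonneg f
  have hf : ∀ p, |f p| ≤ C := fun p => f.norm_coe_le_norm p
  -- the error from the interaction between the blocks
  have ha : Tendsto (fun n : ℕ => C * (Real.exp (2 * (α (2 * n) * n)) - 1)) atTop (nhds 0) := by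
    have h1 : Tendsto (fun n : ℕ => 2 * n) atTop atTop :=
      tendsto_id.const_mul_atTop' (by norm_num)
    have h2 := hNα.comp h1
    have h3 : Tendsto (fun n : ℕ => 2 * (α (2 * n) * n)) atTop (nhds 0) := by
      refine h2.congr fun n => ?_
      simp only [Function.comp]; push_cast; ring
    have h4 := ((Real.continuous_exp.tendsto 0).comp h3).sub_const 1
    have h5 := h4.const_mul C
    simpa using h5
  rw [Metric.tendsto_atTop']
  intro η hη
  obtain ⟨ε, hε, hsym⟩ := symf_cont f f.continuous mp (η / 4) (by linarith)
  obtain ⟨δ, hδ, hgap⟩ := G_gap hγ hmp hfix ε hε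
  have hb : Tendsto (fun n : ℕ => 4 * C * (((n:ℝ) + 1) * Real.exp (-(n * δ)))) atTop (nhds 0) := by
    simpa using (bad_tendsto δ hδ).const_mul (4 * C)
  have hev := ((ha.eventually_lt_const (show (0:ℝ) < η / 4 by linarith)).and
    (hb.eventually_lt_const (show (0:ℝ) < η / 4 by linarith))).and (eventually_gt_atTop 0)
  obtain ⟨n₀, hn₀⟩ := eventually_atTop.mp hev
  refine ⟨n₀, fun n hn => ?_⟩
  obtain ⟨⟨e1, e2⟩, hn0⟩ := hn₀ n hn.le
  rw [Real.dist_eq, integral_twoMag]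
  have hE0 := prod_close f hC (by linarith) hf hsym (bad_le hn0 (by linarith) hgap)
  have hcmp := compare_avg (ι := TwoConf n) (fun σ => cw n (β / 2) σ.1 * cw n (β / 2) σ.2)
    (fun σ => α (2 * n) * ∑ i, spinVal (σ.1 i) * spinVal (σ.2 i))
    (fun σ => f (Ssum n σ.1 / n, Ssum n σ.2 / n)) (α (2 * n) * n) C hC
    (fun σ => mul_pos (cw_pos _ _ _) (cw_pos _ _ _))
    (fun σ => by
      rw [abs_mul, abs_of_pos (hαpos _)]
      exact mul_le_mul_of_nonneg_left (inter_bound σ) (hαpos _).le)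
    (fun σ => hf _)
  have hm1 : ∀ σ : TwoConf n, mag1 n σ = Ssum n σ.1 / n := fun σ => mag_eq n _
  have hm2 : ∀ σ : TwoConf n, mag2 n σ = Ssum n σ.2 / n := fun σ => mag_eq n _
  simp_rw [twoH_eq, hm1, hm2]
  rw [abs_le] at hE0 hcmp
  rw [abs_lt]
  constructor <;> linarith [hE0.1, hE0.2, hcmp.1, hcmp.2]

end
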